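/- Let L be a finite modular non-distributive lattice and I_L ⊂ S = K[L] its join-meet ideal. Then β_{2,4}(S/I_L) > 0; in particular, the ideal I_L, which is generated in degree 2, is not linearly related, and hence I_L does not have a linear resolution. -/

import Mathlib

open MvPolynomial

/-- The join-meet ideal `I_L` of a finite lattice `L`, generated by
`x_a x_b − x_{a∧b} x_{a∨b}` for incomparable `a, b ∈ L`. -/
noncomputable def joinMeetIdeal (K : Type*) [Field K] (L : Type*) [Lattice L] :
    Ideal (MvPolynomial L K) :=
  Ideal.span {f | ∃ a b : L, ¬ a ≤ b ∧ ¬ b ≤ a ∧ f = X a * X b - X (a ⊓ b) * X (a ⊔ b)}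

def mdeg {σ : Type*} (m : σ →₀ ℕ) : ℕ := m.sum fun _ e => e

/-- A minimal graded free resolution
`⋯ → F_{i+1} → F_i → ⋯ → F_0 → S/I → 0` of `S/I` over `S = K[x_s : s ∈ σ]`.
`F_i` is free with finite homogeneous basis `B i`, the basis element `b : B i` having
degree `deg i b`; the differentials are graded and have entries in the graded maximal
ideal (minimality); `ε` is a lift of the augmentation `F_0 → S/I`. -/
structure MinGradedFreeRes (K : Type*) [Field K] (σ : Type*) (I : Ideal (MvPolynomial σ K)) where
  B : ℕ → Type
  finB : ∀ i, Finite (B i)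
  deg : ∀ i, B i → ℕ
  d : ∀ i, ((B (i + 1)) →₀ MvPolynomial σ K) →ₗ[MvPolynomial σ K] ((B i) →₀ MvPolynomial σ K)
  ε : ((B 0) →₀ MvPolynomial σ K) →ₗ[MvPolynomial σ K] MvPolynomial σ K
  ε_homog : ∀ b : B 0, (ε (Finsupp.single b 1)).IsHomogeneous (deg 0 b)
  surj : ∀ s : MvPolynomial σ K, ∃ t, ε t - s ∈ I
  exact0 : LinearMap.range (d 0) = Submodule.comap ε (I : Submodule _ _)
  exact : ∀ i, LinearMap.range (d (i + 1)) = LinearMap.ker (d i)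
  homog : ∀ i (b : B (i + 1)) (c : B i),
    ∀ m ∈ ((d i (Finsupp.single b 1)) c).support, mdeg m + deg i c = deg (i + 1) b
  minimal : ∀ i (b : B (i + 1)) (c : B i), coeff 0 ((d i (Finsupp.single b 1)) c) = 0

/-- The graded Betti number `β_{i,j}(S/I)` read off from a minimal graded free resolution:
the number of basis elements of `F_i` of degree `j`. -/
noncomputable def MinGradedFreeRes.betti {K : Type*} [Field K] {σ : Type*}
    {I : Ideal (MvPolynomial σ K)} (F : MinGradedFreeRes K σ I) (i j : ℕ) : ℕ :=
  Nat.card {b : F.B i // F.deg i b = j}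

section LatticePart

set_option linter.unusedSectionVars false

variable {L : Type*} [Lattice L] [IsModularLattice L]

/-- Half of the classical computation with the free modular lattice on three generators. -/
theorem med_sup (x y z : L) :
    x ⊓ (y ⊔ z) ⊔ y ⊓ (x ⊔ z) = (x ⊔ y) ⊓ (y ⊔ z) ⊓ (x ⊔ z) := by
  have h1 : x ⊓ (y ⊔ z) ≤ x ⊔ z := inf_le_left.trans le_sup_left
  rw [← sup_inf_assoc_of_le y h1]
  have h2 : x ⊓ (y ⊔ z) ⊔ y = (x ⊔ y) ⊓ (y ⊔ z) := by
    rw [sup_comm, sup_comm x y]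
    exact (sup_inf_assoc_of_le x (le_sup_left : y ≤ y ⊔ z)).symm
  rw [h2]

theorem med_inf (x y z : L) :
    (x ⊔ (y ⊓ z)) ⊓ (y ⊔ (x ⊓ z)) = (x ⊓ y) ⊔ (y ⊓ z) ⊔ (x ⊓ z) :=
  med_sup (L := Lᵒᵈ) (OrderDual.toDual x) (OrderDual.toDual y) (OrderDual.toDual z)

/-- The lower median. -/
def lowMed (x y z : L) : L := (x ⊓ y) ⊔ (y ⊓ z) ⊔ (x ⊓ z)

/-- The upper median. -/
def upMed (x y z : L) : L := (x ⊔ y) ⊓ (y ⊔ z) ⊓ (x ⊔ z)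

theorem lowMed_le_upMed (x y z : L) : lowMed x y z ≤ upMed x y z := by
  unfold lowMed upMed
  refine sup_le (sup_le ?_ ?_) ?_ <;> refine le_inf (le_inf ?_ ?_) ?_
  all_goals first
    | exact inf_le_left.trans le_sup_left
    | exact inf_le_left.trans le_sup_right
    | exact inf_le_right.trans le_sup_left
    | exact inf_le_right.trans le_sup_right

theorem inf_upMed (x y z : L) : x ⊓ upMed x y z = x ⊓ (y ⊔ z) := by
  unfold upMed
  apply le_antisymm
  · exact inf_le_inf_left _ (inf_le_left.trans inf_le_right)
  · refine le_inf inf_le_left (le_inf (le_inf ?_ inf_le_right) ?_)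
    · exact inf_le_left.trans le_sup_left
    · exact inf_le_left.trans le_sup_left

theorem sup_lowMed (x y z : L) : x ⊔ lowMed x y z = x ⊔ (y ⊓ z) :=
  inf_upMed (L := Lᵒᵈ) (OrderDual.toDual x) (OrderDual.toDual y) (OrderDual.toDual z)

theorem upMed_swap (x y z : L) : upMed x y z = upMed y x z := by
  unfold upMed; rw [sup_comm x y, inf_right_comm]

theorem upMed_swap' (x y z : L) : upMed x y z = upMed x z y := by
  unfold upMed; rw [sup_comm y z]; ac_rfl

theorem lowMed_swap (x y z : L) : lowMed x y z = lowMed y x z := by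
  unfold lowMed; rw [inf_comm x y, sup_right_comm]

theorem lowMed_swap' (x y z : L) : lowMed x y z = lowMed x z y := by
  unfold lowMed; rw [inf_comm y z]; ac_rfl

/-- The atom of the diamond attached to the first variable. -/
def dia (x y z : L) : L := lowMed x y z ⊔ (x ⊓ upMed x y z)

theorem dia_eq (x y z : L) : dia x y z = (lowMed x y z ⊔ x) ⊓ upMed x y z :=
  (sup_inf_assoc_of_le x (lowMed_le_upMed x y z)).symm

theorem dia_sup (x y z : L) : dia x y z ⊔ dia y x z = upMed x y z := by
  unfold dia
  rw [← lowMed_swap x y z, ← sup_sup_distrib_left, inf_upMed, inf_upMed, med_sup]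
  exact sup_eq_right.2 (lowMed_le_upMed x y z)

theorem dia_inf (x y z : L) : dia x y z ⊓ dia y x z = lowMed x y z := by
  rw [dia_eq, dia_eq, ← upMed_swap x y z, ← inf_inf_distrib_right, sup_comm _ x, sup_comm _ y,
    sup_lowMed, sup_lowMed, med_inf]
  exact inf_eq_left.2 (lowMed_le_upMed x y z)

theorem dia_swap (x y z : L) : dia x y z = dia x z y := by
  unfold dia; rw [lowMed_swap', upMed_swap']

theorem exists_diamond (hnd : ¬ ∀ x y z : L, x ⊓ (y ⊔ z) = (x ⊓ y) ⊔ (x ⊓ z)) :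
    ∃ p q a b c : L, p < a ∧ a ⊓ b = p ∧ a ⊓ c = p ∧ b ⊓ c = p ∧
      a ⊔ b = q ∧ a ⊔ c = q ∧ b ⊔ c = q := by
  push Not at hnd
  obtain ⟨x, y, z, h⟩ := hnd
  have hpq : lowMed x y z ≠ upMed x y z := by
    intro e
    apply h
    rw [← inf_upMed x y z, ← e]
    unfold lowMed
    have h1 : (x ⊓ y) ⊔ (x ⊓ z) ≤ x := sup_le inf_le_left inf_le_left
    rw [sup_right_comm, inf_comm x, sup_inf_assoc_of_le _ h1]
    refine sup_eq_left.2 ?_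
    refine le_trans ?_ (le_sup_left : x ⊓ y ≤ _)
    exact le_inf inf_le_right (inf_le_left.trans inf_le_left)
  have ab := dia_inf x y z
  have ab' := dia_sup x y z
  have ac : dia x y z ⊓ dia z x y = lowMed x y z := by
    rw [dia_swap x, dia_inf, lowMed_swap']
  have ac' : dia x y z ⊔ dia z x y = upMed x y z := by
    rw [dia_swap x, dia_sup, upMed_swap']
  have bc : dia y x z ⊓ dia z x y = lowMed x y z := by
    rw [dia_swap y, dia_swap z, dia_inf, lowMed_swap', lowMed_swap]
  have bc' : dia y x z ⊔ dia z x y = upMed x y z := by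
    rw [dia_swap y, dia_swap z, dia_sup, upMed_swap', upMed_swap]
  refine ⟨lowMed x y z, upMed x y z, dia x y z, dia y x z, dia z x y, ?_, ab, ac, bc,
    ab', ac', bc'⟩
  refine lt_of_le_of_ne (le_sup_left) ?_
  intro e
  rw [← e] at ab' ac'
  have hb : dia y x z = upMed x y z := by
    rw [← ab']; refine (sup_eq_right.2 ?_).symm
    rw [← bc]; exact inf_le_left
  have hc : dia z x y = upMed x y z := by
    rw [← ac']; refine (sup_eq_right.2 ?_).symm
    rw [← bc]; exact inf_le_right
  rw [hb, hc, inf_idem] at bc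
  exact hpq bc.symm

/-- A finite modular non-distributive lattice contains a covering diamond. -/
theorem exists_covering_diamond [Finite L]
    (hnd : ¬ ∀ x y z : L, x ⊓ (y ⊔ z) = (x ⊓ y) ⊔ (x ⊓ z)) :
    ∃ p q a b c : L, p ⋖ a ∧ p ⋖ b ∧ a ⋖ q ∧ b ⋖ q ∧ a ⊓ b = p ∧ a ⊔ b = q ∧
      a ⊓ c = p ∧ a ⊔ c = q ∧ b ⊓ c = p ∧ b ⊔ c = q := by
  obtain ⟨p, q, a, b, c, hpa, ab, ac, bc, ab', ac', bc'⟩ := exists_diamond hnd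
  obtain ⟨a₁, hc, hle⟩ : ∃ a₁, p ⋖ a₁ ∧ a₁ ≤ a := exists_covBy_le_of_lt hpa
  have hpb : p ≤ b := ab ▸ inf_le_right
  have hpc : p ≤ c := ac ▸ inf_le_right
  set b₁ := (a₁ ⊔ c) ⊓ b with hb₁
  set c₁ := (a₁ ⊔ b) ⊓ c with hc₁
  have pb₁ : p ≤ b₁ := le_inf (hc.le.trans le_sup_left) hpb
  have pc₁ : p ≤ c₁ := le_inf (hc.le.trans le_sup_left) hpc
  have i1 : a₁ ⊓ b₁ = p := le_antisymm (ab ▸ inf_le_inf hle inf_le_right) (le_inf hc.le pb₁)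
  have i2 : a₁ ⊓ c₁ = p := le_antisymm (ac ▸ inf_le_inf hle inf_le_right) (le_inf hc.le pc₁)
  have i3 : b₁ ⊓ c₁ = p := le_antisymm (bc ▸ inf_le_inf inf_le_right inf_le_right)
    (le_inf pb₁ pc₁)
  have s1 : a₁ ⊔ b₁ = (a₁ ⊔ b) ⊓ (a₁ ⊔ c) := by
    rw [hb₁, inf_comm (a₁ ⊔ c) b, sup_inf_assoc_of_le b (le_sup_left : a₁ ≤ a₁ ⊔ c)]
  have s2 : a₁ ⊔ c₁ = (a₁ ⊔ b) ⊓ (a₁ ⊔ c) := by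
    rw [hc₁, inf_comm (a₁ ⊔ b) c, ← sup_inf_assoc_of_le c (le_sup_left : a₁ ≤ a₁ ⊔ b), inf_comm]
  have s3 : b₁ ⊔ c₁ = (a₁ ⊔ b) ⊓ (a₁ ⊔ c) := by
    have hb : b₁ ≤ a₁ ⊔ b := inf_le_right.trans le_sup_right
    rw [hc₁, inf_comm (a₁ ⊔ b) c, ← sup_inf_assoc_of_le c hb, inf_comm]
    congr 1
    rw [hb₁, inf_comm, sup_comm, ← sup_inf_assoc_of_le b (le_sup_right : c ≤ a₁ ⊔ c),
      sup_comm c b, bc']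
    refine inf_eq_right.2 (sup_le ?_ ?_)
    · rw [← ab']; exact hle.trans le_sup_left
    · rw [← ac']; exact le_sup_right
  set r := (a₁ ⊔ b) ⊓ (a₁ ⊔ c)
  have bq : b₁ ⋖ r := by
    rw [← s1]; apply covBy_sup_of_inf_covBy_left; rwa [i1]
  have cq : c₁ ⋖ r := by
    rw [← s2]; apply covBy_sup_of_inf_covBy_left; rwa [i2]
  have pb : p ⋖ b₁ := by
    rw [← i3, inf_comm]; apply inf_covBy_of_covBy_sup_left
    rw [sup_comm, s3]; exact cq
  have aq : a₁ ⋖ r := by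
    rw [← s1]; apply covBy_sup_of_inf_covBy_right; rwa [i1]
  exact ⟨p, r, a₁, b₁, c₁, hc, pb, aq, bq, i1, s1, i2, s2, i3, s3⟩

end LatticePart

section ExistencePart

set_option linter.unusedSectionVars false

variable {K : Type*} [Field K] {σ : Type*}

theorem mdeg_eq_degree (m : σ →₀ ℕ) : mdeg m = m.degree := rfl

theorem mdeg_add (m m' : σ →₀ ℕ) : mdeg (m + m') = mdeg m + mdeg m' := by
  simp [mdeg_eq_degree]

theorem mdeg_zero : mdeg (0 : σ →₀ ℕ) = 0 := by
  simp [mdeg_eq_degree]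

theorem mdeg_eq_zero (m : σ →₀ ℕ) (h : mdeg m = 0) : m = 0 := by
  rw [mdeg_eq_degree] at h
  exact (Finsupp.degree_eq_zero_iff m).1 h

/-- Homogeneous elements of a graded free module. -/
def IsHEl {B : Type*} (deg : B → ℕ) (n : ℕ) (t : B →₀ MvPolynomial σ K) : Prop :=
  ∀ c, ∀ m ∈ (t c).support, mdeg m + deg c = n

/-- Homogeneous components in a graded free module. -/
noncomputable def hcomp {B : Type*} [Finite B] (deg : B → ℕ) (n : ℕ)
    (t : B →₀ MvPolynomial σ K) : B →₀ MvPolynomial σ K :=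
  Finsupp.equivFunOnFinite.symm
    (fun c => if deg c ≤ n then homogeneousComponent (n - deg c) (t c) else 0)

variable {B : Type*} [Finite B] (deg : B → ℕ)

theorem coeff_hcomp (n : ℕ) (t : B →₀ MvPolynomial σ K) (c : B) (m : σ →₀ ℕ) :
    coeff m (hcomp deg n t c) = if mdeg m + deg c = n then coeff m (t c) else 0 := by
  simp only [hcomp, Finsupp.equivFunOnFinite_symm_apply_apply]
  rw [mdeg_eq_degree]
  split_ifs with h1 h2 h2
  · rw [coeff_homogeneousComponent, if_pos (by omega)]
  · rw [coeff_homogeneousComponent, if_neg (by omega)]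
  · omega
  · simp

theorem elem_ext {t t' : B →₀ MvPolynomial σ K} (h : ∀ c m, coeff m (t c) = coeff m (t' c)) :
    t = t' :=
  Finsupp.ext fun c => MvPolynomial.ext _ _ fun m => h c m

theorem hcomp_add (n : ℕ) (t t' : B →₀ MvPolynomial σ K) :
    hcomp deg n (t + t') = hcomp deg n t + hcomp deg n t' := by
  refine elem_ext fun c m => ?_
  rw [Finsupp.add_apply, coeff_add, coeff_hcomp, coeff_hcomp, coeff_hcomp]
  split_ifs <;> simp

theorem hcomp_zero (n : ℕ) : hcomp deg n (0 : B →₀ MvPolynomial σ K) = 0 := by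
  refine elem_ext fun c m => ?_
  rw [coeff_hcomp]
  simp

theorem hcomp_of_isHEl {n k : ℕ} {t : B →₀ MvPolynomial σ K} (h : IsHEl deg k t) :
    hcomp deg n t = if k = n then t else 0 := by
  refine elem_ext fun c m => ?_
  rw [coeff_hcomp]
  by_cases hm : coeff m (t c) = 0
  · split_ifs <;> simp [hm]
  · have := h c m (mem_support_iff.2 hm)
    rw [this]
    split_ifs <;> simp

theorem isHEl_hcomp (n : ℕ) (t : B →₀ MvPolynomial σ K) : IsHEl deg n (hcomp deg n t) := by
  intro c m hm
  rw [mem_support_iff, coeff_hcomp] at hm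
  by_contra h
  simp [h] at hm

theorem exists_sum_hcomp (t : B →₀ MvPolynomial σ K) :
    ∃ M : ℕ, t = ∑ n ∈ Finset.range M, hcomp deg n t := by
  classical
  have := Fintype.ofFinite B
  refine ⟨Finset.univ.sup (fun c => (t c).support.sup (fun m => mdeg m + deg c)) + 1, ?_⟩
  refine elem_ext fun c m => ?_
  rw [Finsupp.finsetSum_apply, coeff_sum]
  simp only [coeff_hcomp]
  rw [Finset.sum_ite_eq]
  split_ifs with h
  · rfl
  · by_contra hm
    apply h
    rw [Finset.mem_range, Nat.lt_succ_iff]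
    refine le_trans ?_ (Finset.le_sup
      (f := fun c => (t c).support.sup (fun m => mdeg m + deg c)) (Finset.mem_univ c))
    exact Finset.le_sup (f := fun m => mdeg m + deg c) (mem_support_iff.2 hm)

theorem isHEl_monomial_smul {k : ℕ} {t : B →₀ MvPolynomial σ K} (h : IsHEl deg k t)
    (m : σ →₀ ℕ) (r : K) : IsHEl deg (mdeg m + k) (monomial m r • t) := by
  classical
  intro c m' hm'
  rw [mem_support_iff, Finsupp.smul_apply, smul_eq_mul, coeff_monomial_mul'] at hm'
  split_ifs at hm' with hle
  · have := h c (m' - m) (mem_support_iff.2 (right_ne_zero_of_mul hm'))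
    have e : m + (m' - m) = m' := add_tsub_cancel_of_le hle
    have e' := mdeg_add m (m' - m)
    rw [e] at e'
    omega
  · exact absurd rfl hm'

theorem isHEl_single (b : B) : IsHEl deg (deg b) (Finsupp.single b (1 : MvPolynomial σ K)) := by
  classical
  intro c m hm
  rw [mem_support_iff, Finsupp.single_apply] at hm
  split_ifs at hm with h
  · subst h
    rw [coeff_one] at hm
    split_ifs at hm with h'
    · rw [← h', mdeg_zero, zero_add]
    · exact absurd rfl hm
  · exact absurd (coeff_zero m) hm

theorem map_hcomp {B' : Type*} [Finite B'] (deg' : B' → ℕ)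
    (d : (B' →₀ MvPolynomial σ K) →ₗ[MvPolynomial σ K] (B →₀ MvPolynomial σ K))
    (hd : ∀ b, IsHEl deg (deg' b) (d (Finsupp.single b 1))) (n : ℕ)
    (t : B' →₀ MvPolynomial σ K) :
    d (hcomp deg' n t) = hcomp deg n (d t) := by
  induction t using Finsupp.induction_linear with
  | zero => rw [hcomp_zero, map_zero, hcomp_zero]
  | add f g hf hg => rw [hcomp_add, map_add, hf, hg, map_add, hcomp_add]
  | single b s =>
    induction s using MvPolynomial.monomial_add_induction_on with
    | C a =>
      have e : (Finsupp.single b (C a) : B' →₀ MvPolynomial σ K)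
          = (monomial 0 a : MvPolynomial σ K) • Finsupp.single b 1 := by
        rw [Finsupp.smul_single, smul_eq_mul, mul_one]; rfl
      rw [e, map_smul, hcomp_of_isHEl deg' (isHEl_monomial_smul deg' (isHEl_single deg' b) 0 a),
        hcomp_of_isHEl deg (isHEl_monomial_smul deg (hd b) 0 a)]
      split_ifs
      · rw [map_smul]
      · rw [map_zero]
    | monomial_add m a f hm ha ih =>
      have e : (Finsupp.single b (monomial m a + f) : B' →₀ MvPolynomial σ K)
          = monomial m a • Finsupp.single b 1 + Finsupp.single b f := by
        rw [Finsupp.smul_single, smul_eq_mul, mul_one, Finsupp.single_add]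
      rw [e, hcomp_add, map_add, map_add, hcomp_add, ih, map_smul,
        hcomp_of_isHEl deg' (isHEl_monomial_smul deg' (isHEl_single deg' b) m a),
        hcomp_of_isHEl deg (isHEl_monomial_smul deg (hd b) m a)]
      split_ifs
      · rw [map_smul]
      · rw [map_zero]

/-- Every graded submodule of a finite graded free module has a minimal graded free cover. -/
theorem exists_min_cover [Finite σ] {n : ℕ} (deg : Fin n → ℕ)
    (N : Submodule (MvPolynomial σ K) (Fin n →₀ MvPolynomial σ K))
    (hN : ∀ t ∈ N, ∀ k, hcomp deg k t ∈ N) :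
    ∃ (n' : ℕ) (deg' : Fin n' → ℕ)
      (d : (Fin n' →₀ MvPolynomial σ K) →ₗ[MvPolynomial σ K] (Fin n →₀ MvPolynomial σ K)),
      LinearMap.range d = N ∧ (∀ b, IsHEl deg (deg' b) (d (Finsupp.single b 1))) ∧
      (∀ t ∈ LinearMap.ker d, ∀ c, coeff 0 (t c) = 0) ∧
      (∀ t ∈ LinearMap.ker d, ∀ k, hcomp deg' k t ∈ LinearMap.ker d) := by
  classical
  let P : ℕ → Prop := fun k => ∃ (g : Fin k → (Fin n →₀ MvPolynomial σ K)) (deg' : Fin k → ℕ),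
    (∀ b, IsHEl deg (deg' b) (g b)) ∧ Submodule.span (MvPolynomial σ K) (Set.range g) = N
  have hP : ∃ k, P k := by
    have hspan : Submodule.span (MvPolynomial σ K) {t | t ∈ N ∧ ∃ k, IsHEl deg k t} = N := by
      apply le_antisymm
      · exact Submodule.span_le.2 fun t ht => ht.1
      · intro t ht
        obtain ⟨M, hM⟩ := exists_sum_hcomp deg t
        rw [hM]
        exact Submodule.sum_mem _ fun k _ =>
          Submodule.subset_span ⟨hN t ht k, k, isHEl_hcomp deg k t⟩
    have hfg : N.FG := IsNoetherian.noetherian N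
    rw [← hspan, Submodule.fg_span_iff_fg_span_finset_subset] at hfg
    obtain ⟨s', hs', hs⟩ := hfg
    have hh : ∀ b : Fin s'.card, ∃ k, IsHEl deg k
        (s'.equivFin.symm b : Fin n →₀ MvPolynomial σ K) := fun b =>
      (hs' (s'.equivFin.symm b).2).2
    choose deg' hdeg' using hh
    refine ⟨s'.card, fun b => s'.equivFin.symm b, deg', hdeg', ?_⟩
    rw [← hspan, hs]
    congr 1
    ext t
    constructor
    · rintro ⟨b, rfl⟩; exact (s'.equivFin.symm b).2
    · intro ht; exact ⟨s'.equivFin ⟨t, ht⟩, by simp⟩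
  obtain ⟨g, deg', hg, hspan⟩ := Nat.find_spec hP
  have hmin := fun k hk => Nat.find_min (H := hP) (m := k) hk
  generalize Nat.find hP = k at g deg' hg hspan hmin
  let d := Finsupp.linearCombination (MvPolynomial σ K) g
  have hds : ∀ b, d (Finsupp.single b 1) = g b := fun b => by simp [d]
  have hdh : ∀ b, IsHEl deg (deg' b) (d (Finsupp.single b 1)) := fun b => by
    rw [hds]; exact hg b
  have hker : ∀ t ∈ LinearMap.ker d, ∀ k, hcomp deg' k t ∈ LinearMap.ker d := by
    intro t ht k
    rw [LinearMap.mem_ker] at ht ⊢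
    rw [map_hcomp deg deg' d hdh, ht, hcomp_zero]
  refine ⟨k, deg', d, ?_, hdh, ?_, hker⟩
  · rw [Finsupp.range_linearCombination, hspan]
  · intro t ht c
    by_contra hne
    have ht' := hker t ht (deg' c)
    set t' := hcomp deg' (deg' c) t with ht'def
    have htc : t' c = C (coeff 0 (t c)) := by
      ext m
      rw [ht'def, coeff_hcomp, coeff_C]
      by_cases hm : m = 0
      · subst hm; simp [mdeg_zero]
      · rw [if_neg, if_neg (Ne.symm hm)]
        intro h
        exact hm (mdeg_eq_zero m (by omega))
    obtain ⟨k', rfl⟩ : ∃ k', k = k' + 1 := ⟨k - 1, by have := c.2; omega⟩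
    apply hmin k' (Nat.lt_succ_self _)
    refine ⟨g ∘ c.succAbove, deg' ∘ c.succAbove, fun b => hg _, ?_⟩
    rw [← hspan]
    apply le_antisymm
    · apply Submodule.span_mono
      rintro _ ⟨b, rfl⟩
      exact ⟨_, rfl⟩
    · rw [Submodule.span_le]
      rintro _ ⟨b, rfl⟩
      rcases Fin.eq_self_or_eq_succAbove c b with rfl | ⟨j, rfl⟩
      · rw [LinearMap.mem_ker] at ht'
        have e : d t' = ∑ i, t' i • g i := by
          simp only [d]
          rw [Finsupp.linearCombination_apply, Finsupp.sum_fintype]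
          intro i
          exact zero_smul _ _
        rw [e, Fin.sum_univ_succAbove _ b, htc] at ht'
        have e2 : g b = (C (coeff 0 (t b))⁻¹ : MvPolynomial σ K) • ((C (coeff 0 (t b)) : MvPolynomial σ K) • g b) := by
          rw [smul_smul, ← C_mul, inv_mul_cancel₀ hne, C_1, one_smul]
        rw [e2, eq_neg_of_add_eq_zero_left ht']
        refine Submodule.smul_mem _ _ (Submodule.neg_mem _ (Submodule.sum_mem _ fun j _ => ?_))
        exact Submodule.smul_mem _ _ (Submodule.subset_span ⟨j, rfl⟩)
      · exact Submodule.subset_span ⟨j, rfl⟩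

/-- A stage in the construction of the minimal resolution. -/
structure ResStage (K : Type*) [Field K] (σ : Type*) where
  n : ℕ
  deg : Fin n → ℕ
  N : Submodule (MvPolynomial σ K) (Fin n →₀ MvPolynomial σ K)
  graded : ∀ t ∈ N, ∀ k, hcomp deg k t ∈ N
  min : ∀ t ∈ N, ∀ c, coeff 0 (t c) = 0

theorem ResStage.exists_next [Finite σ] (s : ResStage K σ) :
    ∃ s' : ResStage K σ, ∃ d : (Fin s'.n →₀ MvPolynomial σ K) →ₗ[MvPolynomial σ K]
        (Fin s.n →₀ MvPolynomial σ K),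
      LinearMap.range d = s.N ∧ LinearMap.ker d = s'.N ∧
      ∀ b, IsHEl s.deg (s'.deg b) (d (Finsupp.single b 1)) := by
  obtain ⟨n', deg', d, h1, h2, h3, h4⟩ := exists_min_cover s.deg s.N s.graded
  exact ⟨⟨n', deg', LinearMap.ker d, h4, h3⟩, d, h1, rfl, h2⟩

theorem exists_minRes [Finite σ] (I : Ideal (MvPolynomial σ K))
    (hI : ∀ f ∈ I, ∀ k, homogeneousComponent k f ∈ I) (h0 : ∀ f ∈ I, coeff 0 f = 0) :
    Nonempty (MinGradedFreeRes K σ I) := by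
  classical
  choose next d hrange hker hhom using ResStage.exists_next (K := K) (σ := σ)
  let ε : (Fin 1 →₀ MvPolynomial σ K) →ₗ[MvPolynomial σ K] MvPolynomial σ K := Finsupp.lapply 0
  let s0 : ResStage K σ :=
    { n := 1
      deg := fun _ => 0
      N := Submodule.comap ε I
      graded := by
        intro t ht k
        have : ε (hcomp (fun _ => 0) k t) = homogeneousComponent k (ε t) := by
          simp [ε, hcomp]
        rw [Submodule.mem_comap, this]
        exact hI _ ht k
      min := by
        intro t ht c
        rw [Subsingleton.elim c 0]
        exact h0 _ ht }
  let sq : ℕ → ResStage K σ := fun i => Nat.rec s0 (fun _ s => next s) i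
  refine ⟨{
    B := fun i => Fin (sq i).n
    finB := fun i => inferInstance
    deg := fun i => (sq i).deg
    d := fun i => d (sq i)
    ε := ε
    ε_homog := ?_
    surj := ?_
    exact0 := hrange s0
    exact := fun i => (hrange (sq (i + 1))).trans (hker (sq i)).symm
    homog := fun i b c m hm => hhom (sq i) b c m hm
    minimal := fun i b c => (sq i).min _ ((hrange (sq i)) ▸ LinearMap.mem_range_self _ _) c }⟩
  · intro b
    rw [show b = (0 : Fin 1) from Subsingleton.elim (α := Fin 1) b 0]
    simp only [ε, Finsupp.lapply_apply]
    rw [Finsupp.single_eq_same]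
    exact isHomogeneous_one _ _
  · intro s
    exact ⟨Finsupp.single (0 : Fin 1) s, by simp [ε]⟩

theorem joinMeet_coeff_zero {L : Type*} [Lattice L] (f : MvPolynomial L K)
    (hf : f ∈ joinMeetIdeal K L) : coeff 0 f = 0 := by
  have : joinMeetIdeal K L ≤ RingHom.ker (constantCoeff (R := K) (σ := L)) := by
    unfold joinMeetIdeal
    rw [Ideal.span_le]
    rintro _ ⟨a, b, -, -, rfl⟩
    simp
  exact this hf

theorem joinMeet_homog {L : Type*} [Lattice L] (f : MvPolynomial L K)
    (hf : f ∈ joinMeetIdeal K L) (k : ℕ) : homogeneousComponent k f ∈ joinMeetIdeal K L := by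
  let _ := MvPolynomial.gradedAlgebra (σ := L) (R := K)
  have : (joinMeetIdeal K L).IsHomogeneous (homogeneousSubmodule L K) := by
    unfold joinMeetIdeal
    apply Ideal.homogeneous_span
    rintro _ ⟨a, b, -, -, rfl⟩
    refine ⟨2, ?_⟩
    rw [mem_homogeneousSubmodule]
    exact ((isHomogeneous_X K a).mul (isHomogeneous_X K b)).sub
      ((isHomogeneous_X K _).mul (isHomogeneous_X K _))
  exact (mem_iff_homogeneousComponent_mem this f).1 hf k

end ExistencePart

section SyzygyPart

set_option linter.unusedSectionVars false

variable {K : Type*} [Field K] {L : Type*} [Lattice L]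

/-- The set of generators of the join-meet ideal. -/
def jmGens (K : Type*) [Field K] (L : Type*) [Lattice L] : Set (MvPolynomial L K) :=
  {f | ∃ a b : L, ¬ a ≤ b ∧ ¬ b ≤ a ∧ f = X a * X b - X (a ⊓ b) * X (a ⊔ b)}

theorem X_mul_X (u v : L) : (X u * X v : MvPolynomial L K) =
    monomial (Finsupp.single u 1 + Finsupp.single v 1) 1 := by
  simp [X, monomial_mul]

theorem mem_of_le_M {w a b u v : L} {n : ℕ}
    (h : Finsupp.single u 1 + Finsupp.single v 1 ≤
      Finsupp.single w n + (Finsupp.single a 1 + Finsupp.single b 1)) :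
    (u = w ∨ u = a ∨ u = b) ∧ (v = w ∨ v = a ∨ v = b) := by
  classical
  constructor
  · have := h u
    simp only [Finsupp.add_apply, Finsupp.single_apply] at this
    by_contra hc
    push Not at hc
    simp [Ne.symm hc.1, Ne.symm hc.2.1, Ne.symm hc.2.2] at this
  · have := h v
    simp only [Finsupp.add_apply, Finsupp.single_apply] at this
    by_contra hc
    push Not at hc
    simp [Ne.symm hc.1, Ne.symm hc.2.1, Ne.symm hc.2.2] at this

theorem coeff_mul_gen {w a b : L} (hab : ¬ a ≤ b) (hba : ¬ b ≤ a)
    (hw : (w ⋖ a ∧ w ⋖ b) ∨ (a ⋖ w ∧ b ⋖ w)) (n : ℕ) (h g : MvPolynomial L K)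
    (hg : g ∈ jmGens K L) :
    ((g = X a * X b - X (a ⊓ b) * X (a ⊔ b)) →
      coeff (Finsupp.single w n + (Finsupp.single a 1 + Finsupp.single b 1)) (h * g) =
        coeff (Finsupp.single w n) h) ∧
    ((g ≠ X a * X b - X (a ⊓ b) * X (a ⊔ b)) →
      coeff (Finsupp.single w n + (Finsupp.single a 1 + Finsupp.single b 1)) (h * g) = 0) := by
  classical
  have hII : ∀ u v : L, ¬ u ≤ v → ¬ v ≤ u →
      ¬ (Finsupp.single (u ⊓ v) 1 + Finsupp.single (u ⊔ v) 1 ≤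
        Finsupp.single w n + (Finsupp.single a 1 + Finsupp.single b 1)) := by
    intro u v huv hvu hle
    have h1 : u ⊓ v < u := inf_lt_left.2 huv
    have h2 : u < u ⊔ v := left_lt_sup.2 hvu
    obtain ⟨hs, ht⟩ := mem_of_le_M hle
    generalize u ⊓ v = s at h1 hs
    generalize u ⊔ v = t at h2 ht
    have h3 := h1.trans h2
    rcases hw with ⟨ha, hb⟩ | ⟨ha, hb⟩
    · rcases hs with rfl | rfl | rfl <;> rcases ht with rfl | rfl | rfl
      · exact lt_irrefl _ h3
      · exact ha.2 h1 h2
      · exact hb.2 h1 h2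
      · exact lt_asymm h3 ha.1
      · exact lt_irrefl _ h3
      · exact hab h3.le
      · exact lt_asymm h3 hb.1
      · exact hba h3.le
      · exact lt_irrefl _ h3
    · rcases hs with rfl | rfl | rfl <;> rcases ht with rfl | rfl | rfl
      · exact lt_irrefl _ h3
      · exact lt_asymm h3 ha.1
      · exact lt_asymm h3 hb.1
      · exact ha.2 h1 h2
      · exact lt_irrefl _ h3
      · exact hab h3.le
      · exact hb.2 h1 h2
      · exact hba h3.le
      · exact lt_irrefl _ h3
  constructor
  · rintro rfl
    rw [mul_sub, coeff_sub, X_mul_X, X_mul_X, coeff_mul_monomial', coeff_mul_monomial',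
      if_neg (hII a b hab hba), if_pos le_add_self, add_tsub_cancel_right, mul_one, sub_zero]
  · intro hne
    obtain ⟨u, v, huv, hvu, rfl⟩ := hg
    rw [mul_sub, coeff_sub, X_mul_X, X_mul_X, coeff_mul_monomial', coeff_mul_monomial',
      if_neg (hII u v huv hvu), if_neg, sub_zero]
    intro hle
    have hwa : w ≤ a ∨ a ≤ w := hw.imp (fun h => h.1.le) (fun h => h.1.le)
    have hwb : w ≤ b ∨ b ≤ w := hw.imp (fun h => h.2.le) (fun h => h.2.le)
    obtain ⟨hs, ht⟩ := mem_of_le_M hle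
    rcases hs with rfl | rfl | rfl <;> rcases ht with rfl | rfl | rfl
    · exact huv le_rfl
    · tauto
    · tauto
    · tauto
    · exact huv le_rfl
    · exact hne rfl
    · tauto
    · exact hne (by rw [mul_comm, inf_comm, sup_comm])
    · exact huv le_rfl

/-- The presentation of the join-meet ideal by its generators. -/
noncomputable def jmPi (K : Type*) [Field K] (L : Type*) [Lattice L] :
    (jmGens K L →₀ MvPolynomial L K) →ₗ[MvPolynomial L K] MvPolynomial L K :=
  Finsupp.linearCombination (MvPolynomial L K) (fun g : jmGens K L => (g : MvPolynomial L K))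

theorem jmPi_ker_coeff {w a b : L} (hab : ¬ a ≤ b) (hba : ¬ b ≤ a)
    (hw : (w ⋖ a ∧ w ⋖ b) ∨ (a ⋖ w ∧ b ⋖ w)) (n : ℕ) (u : jmGens K L →₀ MvPolynomial L K)
    (hu : jmPi K L u = 0) (g₀ : jmGens K L)
    (hg₀ : (g₀ : MvPolynomial L K) = X a * X b - X (a ⊓ b) * X (a ⊔ b)) :
    coeff (Finsupp.single w n) (u g₀) = 0 := by
  classical
  have h := congrArg
    (coeff (Finsupp.single w n + (Finsupp.single a 1 + Finsupp.single b 1))) hu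
  rw [jmPi, Finsupp.linearCombination_apply, Finsupp.sum, coeff_sum, coeff_zero] at h
  rw [Finset.sum_eq_single g₀] at h
  · rw [smul_eq_mul, (coeff_mul_gen hab hba hw n _ _ g₀.2).1 hg₀] at h
    exact h
  · intro g _ hne
    rw [smul_eq_mul]
    refine (coeff_mul_gen hab hba hw n _ _ g.2).2 ?_
    rw [← hg₀]
    exact fun e => hne (Subtype.ext e)
  · intro hns
    rw [Finsupp.notMem_support_iff.1 hns, zero_smul, coeff_zero]

theorem jmPi_range (f : MvPolynomial L K) (hf : f ∈ joinMeetIdeal K L) :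
    ∃ u, jmPi K L u = f := by
  have : joinMeetIdeal K L = LinearMap.range (jmPi K L) := by
    rw [jmPi, Finsupp.range_linearCombination, Subtype.range_coe]
    rfl
  rw [this] at hf
  exact hf

theorem jmGens_mem (g : MvPolynomial L K) (hg : g ∈ jmGens K L) : g ∈ joinMeetIdeal K L :=
  Ideal.subset_span hg

theorem jmGens_finite [Finite L] : Finite (jmGens K L) := by
  apply Set.Finite.subset (Set.finite_range
    (fun ab : L × L => (X ab.1 * X ab.2 - X (ab.1 ⊓ ab.2) * X (ab.1 ⊔ ab.2) : MvPolynomial L K)))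
  rintro _ ⟨a, b, -, -, rfl⟩
  exact ⟨(a, b), rfl⟩

/-- A homogeneous element of the ideal lifts to a homogeneous element of the presentation. -/
theorem jmPi_lift [Finite (jmGens K L)] (f : MvPolynomial L K) (hf : f ∈ joinMeetIdeal K L)
    (k : ℕ) (hk : ∀ m ∈ f.support, mdeg m = k) :
    ∃ u, jmPi K L u = f ∧ IsHEl (fun _ : jmGens K L => 2) k u := by
  obtain ⟨u, hu⟩ := jmPi_range f hf
  refine ⟨hcomp (fun _ => 2) k u, ?_, isHEl_hcomp _ _ _⟩
  let d : (jmGens K L →₀ MvPolynomial L K) →ₗ[MvPolynomial L K] (Unit →₀ MvPolynomial L K) :=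
    (Finsupp.lsingle ()).comp (jmPi K L)
  have hd : ∀ t, d t () = jmPi K L t := fun t => by simp [d]
  have hh : ∀ b, IsHEl (fun _ : Unit => 0) 2 (d (Finsupp.single b 1)) := by
    intro b c m hm
    rw [show c = () from rfl, hd, jmPi, Finsupp.linearCombination_single, one_smul] at hm
    obtain ⟨u, v, -, -, hb⟩ := b.2
    rw [hb] at hm
    have hH : (X u * X v - X (u ⊓ v) * X (u ⊔ v) : MvPolynomial L K).IsHomogeneous 2 :=
      ((isHomogeneous_X K u).mul (isHomogeneous_X K v)).sub
      ((isHomogeneous_X K _).mul (isHomogeneous_X K _))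
    have h2 := hH.degree_eq_sum_deg_support hm
    exact h2.symm
  have e := map_hcomp (fun _ : Unit => 0) (fun _ : jmGens K L => 2) d hh k u
  have hdu : IsHEl (fun _ : Unit => 0) k (d u) := by
    intro c m hm
    rw [show c = () from rfl, hd, hu] at hm
    exact hk m hm
  rw [hcomp_of_isHEl _ hdu, if_pos rfl] at e
  rw [← hd, e, hd, hu]

/-- The structure of `F₀` in a minimal resolution of `S/I`. -/
theorem minRes_zero {σ : Type*} {I : Ideal (MvPolynomial σ K)} (h0 : ∀ f ∈ I, coeff 0 f = 0)
    (F : MinGradedFreeRes K σ I) :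
    ∃ (b₀ : F.B 0) (k : K), k ≠ 0 ∧ F.deg 0 b₀ = 0 ∧ (∀ b, b = b₀) ∧
      ∀ t, F.ε t = C k * t b₀ := by
  classical
  obtain ⟨t, ht⟩ := F.surj 1
  have ht1 : coeff 0 (F.ε t) = 1 := by
    have := h0 _ ht
    rw [coeff_sub, coeff_zero_one, sub_eq_zero] at this
    exact this
  have hε : ∀ s : F.B 0 →₀ MvPolynomial σ K,
      F.ε s = s.sum fun b r => r * F.ε (Finsupp.single b 1) := by
    intro s
    conv_lhs => rw [← Finsupp.sum_single s]
    rw [Finsupp.sum, map_sum]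
    refine Finset.sum_congr rfl fun b _ => ?_
    simp only
    rw [← smul_eq_mul, ← map_smul, Finsupp.smul_single, smul_eq_mul, mul_one]
  obtain ⟨b₀, hb₀⟩ : ∃ b, coeff 0 (F.ε (Finsupp.single b 1)) ≠ 0 := by
    by_contra hc
    push Not at hc
    rw [hε t, Finsupp.sum, coeff_sum, Finset.sum_eq_zero] at ht1
    · exact zero_ne_one ht1
    · intro b _
      rw [← constantCoeff_eq, map_mul, constantCoeff_eq, hc b, mul_zero]
  have hdeg : F.deg 0 b₀ = 0 := by
    have := (F.ε_homog b₀) hb₀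
    simpa using this.symm
  have hk : F.ε (Finsupp.single b₀ 1) = C (coeff 0 (F.ε (Finsupp.single b₀ 1))) := by
    have := F.ε_homog b₀
    rw [hdeg] at this
    exact totalDegree_eq_zero_iff_eq_C.1 (by simpa using this.totalDegree_le)
  set k := coeff 0 (F.ε (Finsupp.single b₀ 1)) with hkdef
  have huniq : ∀ b, b = b₀ := by
    intro b
    by_contra hne
    let s : F.B 0 →₀ MvPolynomial σ K := Finsupp.single b 1 -
      (C k⁻¹ * F.ε (Finsupp.single b 1)) • Finsupp.single b₀ 1
    have hs : F.ε s = 0 := by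
      simp only [s]
      rw [map_sub, map_smul, hk, smul_eq_mul, mul_right_comm, ← C_mul, inv_mul_cancel₀ hb₀, C_1,
        one_mul, sub_self]
    have hs' : s ∈ LinearMap.range (F.d 0) := by
      rw [F.exact0, Submodule.mem_comap, hs]
      exact Submodule.zero_mem _
    obtain ⟨r, hr⟩ := hs'
    have h1 : coeff 0 (s b) = 1 := by
      simp [s, hne]
    have h2 : coeff 0 ((F.d 0 r) b) = 0 := by
      conv_lhs => rw [← Finsupp.sum_single r]
      rw [Finsupp.sum, map_sum, Finsupp.finsetSum_apply, coeff_sum]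
      refine Finset.sum_eq_zero fun c _ => ?_
      rw [show Finsupp.single c (r c) = r c • Finsupp.single c (1 : MvPolynomial σ K) by
        rw [Finsupp.smul_single, smul_eq_mul, mul_one], map_smul, Finsupp.smul_apply, smul_eq_mul,
        ← constantCoeff_eq, map_mul, constantCoeff_eq, F.minimal, mul_zero]
    rw [hr, h1] at h2
    exact one_ne_zero h2
  refine ⟨b₀, k, hb₀, hdeg, huniq, fun s => ?_⟩
  have hs : s = s b₀ • Finsupp.single b₀ 1 := by
    ext1 b
    rw [huniq b]
    simp
  conv_lhs => rw [hs]
  rw [map_smul, hk, smul_eq_mul, mul_comm]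

theorem coeff_pq {p q a b : L} (hap : a ≠ p) (haq : a ≠ q) (u : MvPolynomial L K) :
    coeff (Finsupp.single p 1 + Finsupp.single q 1) ((X a * X b - X p * X q) * u) =
      - coeff 0 u := by
  classical
  rw [mul_comm, mul_sub, coeff_sub, X_mul_X, X_mul_X, coeff_mul_monomial', coeff_mul_monomial',
    if_neg, if_pos le_rfl, tsub_self, mul_one, zero_sub]
  intro h
  have := h a
  simp [Finsupp.single_apply, Ne.symm hap, Ne.symm haq] at this

theorem exists_deg_four [Finite L] {p q a b c : L} (hpa : p ⋖ a) (hpb : p ⋖ b) (haq : a ⋖ q)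
    (hbq : b ⋖ q) (iab : a ⊓ b = p) (sab : a ⊔ b = q) (iac : a ⊓ c = p) (sac : a ⊔ c = q)
    (ibc : b ⊓ c = p) (F : MinGradedFreeRes K L (joinMeetIdeal K L)) :
    ∃ e : F.B 2, F.deg 2 e = 4 := by
  classical
  have hab : ¬ a ≤ b := fun h => hpa.1.ne (by rw [← iab, inf_eq_left.2 h])
  have hba : ¬ b ≤ a := fun h => hpb.1.ne (by rw [← iab, inf_eq_right.2 h])
  have hac : ¬ a ≤ c := fun h => hpa.1.ne (by rw [← iac, inf_eq_left.2 h])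
  have hca : ¬ c ≤ a := fun h => haq.1.ne (by rw [← sac, sup_eq_left.2 h])
  have hbc : b ≠ c := by
    rintro rfl
    rw [inf_idem] at ibc
    exact hpb.1.ne ibc.symm
  have hpq : p ≠ q := (hpa.1.trans haq.1).ne
  have := jmGens_finite (K := K) (L := L)
  have := F.finB 1
  have := F.finB 2
  obtain ⟨b₀, k, hk, hdeg0, huniq, hε⟩ := minRes_zero (joinMeet_coeff_zero (K := K) (L := L)) F
  -- the composite `F₁ → F₀ → S`
  let θ := F.ε.comp (F.d 0)
  have hθI : ∀ t, θ t ∈ joinMeetIdeal K L := fun t => by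
    have : F.d 0 t ∈ LinearMap.range (F.d 0) := LinearMap.mem_range_self _ _
    rw [F.exact0] at this
    exact this
  have hθs : ∀ f ∈ joinMeetIdeal K L, ∃ t, θ t = f := by
    intro f hf
    have he : F.ε (Finsupp.single b₀ (C k⁻¹ * f)) = f := by
      rw [hε, Finsupp.single_eq_same, ← mul_assoc, ← C_mul, mul_inv_cancel₀ hk, C_1, one_mul]
    have hm : Finsupp.single b₀ (C k⁻¹ * f) ∈ LinearMap.range (F.d 0) := by
      rw [F.exact0, Submodule.mem_comap, he]
      exact hf
    obtain ⟨t, ht⟩ := hm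
    exact ⟨t, by rw [LinearMap.comp_apply, ht, he]⟩
  have hθk : ∀ t, θ t = 0 → F.d 0 t = 0 := by
    intro t ht
    rw [LinearMap.comp_apply, hε] at ht
    have : F.d 0 t b₀ = 0 := (mul_eq_zero.1 ht).resolve_left (by simpa using hk)
    ext1 x
    rw [huniq x, this]
    rfl
  -- comparison map to the presentation by the binomial generators
  have hlift : ∀ x : F.B 1, ∃ u, jmPi K L u = θ (Finsupp.single x 1) ∧
      IsHEl (fun _ : jmGens K L => 2) (F.deg 1 x) u := by
    intro x
    apply jmPi_lift _ (hθI _)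
    intro m hm
    rw [LinearMap.comp_apply, hε, mem_support_iff, coeff_C_mul] at hm
    have := F.homog 0 x b₀ m (mem_support_iff.2 (right_ne_zero_of_mul hm))
    rw [hdeg0, add_zero] at this
    exact this
  choose v hv hvh using hlift
  let φ := Finsupp.linearCombination (MvPolynomial L K) v
  have hφs : ∀ x, φ (Finsupp.single x 1) = v x := fun x => by simp [φ]
  have hφ : ∀ t, jmPi K L (φ t) = θ t := by
    have : (jmPi K L).comp φ = θ := by
      ext x : 2
      simp only [LinearMap.comp_apply, Finsupp.lsingle_apply]
      rw [hφs, hv]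
    intro t
    rw [← this, LinearMap.comp_apply]
  have hφh : ∀ x, IsHEl (fun _ : jmGens K L => 2) (F.deg 1 x) (φ (Finsupp.single x 1)) :=
    fun x => by rw [hφs]; exact hvh x
  let f2 : MvPolynomial L K := X a * X b - X p * X q
  let f3 : MvPolynomial L K := X a * X c - X p * X q
  let g2 : jmGens K L := ⟨f2, a, b, hab, hba, by rw [iab, sab]⟩
  let g3 : jmGens K L := ⟨f3, a, c, hac, hca, by rw [iac, sac]⟩
  have hg2 : (g2 : MvPolynomial L K) = X a * X b - X (a ⊓ b) * X (a ⊔ b) := by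
    rw [iab, sab]
  have hg23 : g3 ≠ g2 := by
    intro h
    have h' : f3 = f2 := congrArg Subtype.val h
    have h'' : (X a * X c : MvPolynomial L K) = X a * X b := sub_left_injective h'
    exact hbc (X_injective (mul_left_cancel₀ (X_ne_zero a) h'')).symm
  obtain ⟨t2, ht2⟩ := hθs f2 (jmGens_mem _ g2.2)
  obtain ⟨t3, ht3⟩ := hθs f3 (jmGens_mem _ g3.2)
  have hP : (p ⋖ a ∧ p ⋖ b) ∨ (a ⋖ p ∧ b ⋖ p) := Or.inl ⟨hpa, hpb⟩
  have hQ : (q ⋖ a ∧ q ⋖ b) ∨ (a ⋖ q ∧ b ⋖ q) := Or.inr ⟨haq, hbq⟩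
  have hpi : ∀ g : jmGens K L, jmPi K L (Finsupp.single g 1) = g := fun g => by simp [jmPi]
  have c2 : coeff 0 (φ t2 g2) = 1 := by
    have h := jmPi_ker_coeff hab hba hP 0 (φ t2 - Finsupp.single g2 1)
      (by rw [map_sub, hφ, ht2, hpi, sub_self]) g2 hg2
    rw [Finsupp.single_zero, Finsupp.sub_apply, coeff_sub, Finsupp.single_eq_same,
      coeff_zero_one, sub_eq_zero] at h
    exact h
  have c3 : coeff 0 (φ t3 g2) = 0 := by
    have h := jmPi_ker_coeff hab hba hP 0 (φ t3 - Finsupp.single g3 1)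
      (by rw [map_sub, hφ, ht3, hpi, sub_self]) g2 hg2
    rw [Finsupp.single_zero, Finsupp.sub_apply, coeff_sub, Finsupp.single_eq_of_ne hg23.symm,
      coeff_zero, sub_zero] at h
    exact h
  -- the Koszul syzygy
  let T := f2 • t3 - f3 • t2
  have hT : T ∈ LinearMap.ker (F.d 0) := by
    rw [LinearMap.mem_ker]
    apply hθk
    simp only [T]
    rw [map_sub, map_smul, map_smul, ht2, ht3, smul_eq_mul, smul_eq_mul, mul_comm, sub_self]
  rw [← F.exact 0] at hT
  obtain ⟨s, hs⟩ := hT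
  have hTc : coeff (Finsupp.single p 1 + Finsupp.single q 1) (φ T g2) = 1 := by
    simp only [T]
    rw [map_sub, map_smul, map_smul, Finsupp.sub_apply, Finsupp.smul_apply, Finsupp.smul_apply,
      smul_eq_mul, smul_eq_mul, coeff_sub, coeff_pq hpa.1.ne' haq.1.ne,
      coeff_pq hpa.1.ne' haq.1.ne, c2, c3]
    simp
  by_contra hno
  push Not at hno
  have hz : coeff (Finsupp.single p 1 + Finsupp.single q 1) (φ T g2) = 0 := by
    rw [← hs]
    conv_lhs => rw [← Finsupp.sum_single s]
    rw [Finsupp.sum, map_sum, map_sum, Finsupp.finsetSum_apply, coeff_sum]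
    refine Finset.sum_eq_zero fun e _ => ?_
    rw [show Finsupp.single e (s e) = s e • Finsupp.single e (1 : MvPolynomial L K) by
      rw [Finsupp.smul_single, smul_eq_mul, mul_one], map_smul, map_smul, Finsupp.smul_apply,
      smul_eq_mul, coeff_mul]
    refine Finset.sum_eq_zero fun x hx => ?_
    rw [Finset.HasAntidiagonal.mem_antidiagonal] at hx
    have hle : x.2 ≤ Finsupp.single p 1 + Finsupp.single q 1 := hx ▸ le_add_self
    have hker : jmPi K L (φ (F.d 1 (Finsupp.single e 1))) = 0 := by
      have : F.d 1 (Finsupp.single e 1) ∈ LinearMap.ker (F.d 0) := by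
        rw [← F.exact 0]
        exact LinearMap.mem_range_self _ _
      rw [hφ, LinearMap.comp_apply, LinearMap.mem_ker.1 this, map_zero]
    have hH : IsHEl (fun _ : jmGens K L => 2) (F.deg 2 e) (φ (F.d 1 (Finsupp.single e 1))) := by
      have h1 : IsHEl (F.deg 1) (F.deg 2 e) (F.d 1 (Finsupp.single e 1)) := F.homog 1 e
      have h2 := map_hcomp (fun _ : jmGens K L => 2) (F.deg 1) φ hφh (F.deg 2 e)
        (F.d 1 (Finsupp.single e 1))
      rw [hcomp_of_isHEl _ h1, if_pos rfl] at h2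
      rw [h2]
      exact isHEl_hcomp _ _ _
    have hother : ∀ z, z ≠ p → z ≠ q → x.2 z = 0 := by
      intro z hzp hzq
      have := hle z
      simpa [Finsupp.single_apply, Ne.symm hzp, Ne.symm hzq] using this
    have hlp : x.2 p ≤ 1 := by
      have := hle p
      simpa [Finsupp.single_apply, hpq, hpq.symm] using this
    have hlq : x.2 q ≤ 1 := by
      have := hle q
      simpa [Finsupp.single_apply, hpq, hpq.symm] using this
    have hzero : coeff x.2 (φ (F.d 1 (Finsupp.single e 1)) g2) = 0 := by
      by_cases hxp : x.2 p = 0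
      · have : x.2 = Finsupp.single q (x.2 q) := by
          ext z
          by_cases hzq : z = q
          · subst hzq; simp
          · rw [Finsupp.single_eq_of_ne hzq]
            by_cases hzp : z = p
            · rw [hzp, hxp]
            · exact hother z hzp hzq
        rw [this]
        exact jmPi_ker_coeff hab hba hQ _ _ hker g2 hg2
      · by_cases hxq : x.2 q = 0
        · have : x.2 = Finsupp.single p (x.2 p) := by
            ext z
            by_cases hzp : z = p
            · subst hzp; simp
            · rw [Finsupp.single_eq_of_ne hzp]
              by_cases hzq : z = q
              · rw [hzq, hxq]
              · exact hother z hzp hzq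
          rw [this]
          exact jmPi_ker_coeff hab hba hP _ _ hker g2 hg2
        · by_contra hne
          have hd := hH g2 x.2 (mem_support_iff.2 hne)
          have : x.2 = Finsupp.single p 1 + Finsupp.single q 1 := by
            ext z
            by_cases hzp : z = p
            · subst hzp
              simp [Finsupp.single_apply, hpq.symm]
              omega
            · by_cases hzq : z = q
              · subst hzq
                simp [Finsupp.single_apply, hpq]
                omega
              · rw [hother z hzp hzq]
                simp [Finsupp.single_apply, Ne.symm hzp, Ne.symm hzq]
          rw [this, mdeg_eq_degree] at hd
          simp at hd
          exact hno e hd.symm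
    rw [hzero, mul_zero]
  rw [hTc] at hz
  exact one_ne_zero hz

end SyzygyPart

/-- If `L` is a finite modular non-distributive lattice, then `β_{2,4}(S/I_L) > 0`; in
particular `I_L` (generated in degree `2`) is not linearly related, and hence it does not
have a linear resolution (some `β_{i,j}(S/I_L)` with `i ≥ 1` and `j ≠ i + 1` is nonzero). -/
theorem not_linearly_related_of_modular_nondistributive (K : Type*) [Field K]
    (L : Type*) [Lattice L] [Fintype L] [IsModularLattice L]
    (hnd : ¬ ∀ x y z : L, x ⊓ (y ⊔ z) = (x ⊓ y) ⊔ (x ⊓ z)) :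
    Nonempty (MinGradedFreeRes K L (joinMeetIdeal K L)) ∧
      ∀ F : MinGradedFreeRes K L (joinMeetIdeal K L),
        0 < F.betti 2 4 ∧ (∃ b : F.B 2, 4 ≤ F.deg 2 b) ∧
          ∃ i, 1 ≤ i ∧ ∃ b : F.B i, F.deg i b ≠ i + 1 := by
  refine ⟨exists_minRes _ joinMeet_homog joinMeet_coeff_zero, fun F => ?_⟩
  obtain ⟨p, q, a, b, c, hpa, hpb, haq, hbq, iab, sab, iac, sac, ibc, -⟩ :=
    exists_covering_diamond hnd
  obtain ⟨e, he⟩ := exists_deg_four hpa hpb haq hbq iab sab iac sac ibc F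
  refine ⟨?_, ⟨e, he.ge⟩, 2, one_le_two, e, by rw [he]; decide⟩
  have := F.finB 2
  have : Nonempty {b : F.B 2 // F.deg 2 b = 4} := ⟨⟨e, he⟩⟩
  exact Nat.card_pos
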